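/- Let a < b be real numbers, let 0 < h < (b − a)/4, and let u : ℝ → ℝ be continuously differentiable on the closed interval [a, b]. Then ∫_a^b |u(t)|² dt ≤ 3 ∫_{a+h}^{b−h} |u(t)|² dt + 4h² ∫_a^b |u′(t)|² dt. -/

import Mathlib

/-!
Comparing the end interval `[a, a + h]` with its translate `[a + h, a + 2h]` gives
`‖u x‖² ≤ 2 ‖u (x + h)‖² + 2 ‖u (x + h) - u x‖²`, and by Cauchy–Schwarz the squared increment is at
most `h ∫ ‖u'‖²` over `[a, a + 2h]`. The other end is symmetric. As `4h ≤ b - a`, the intervals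
`[a, a + 2h]` and `[b - 2h, b]` do not overlap, so the two ends together contribute at most
`2 ∫_{a+h}^{b-h} ‖u‖² + 2h² ∫_a^b ‖u'‖²`.
-/

open MeasureTheory Set

section CauchySchwarz

variable {α E : Type*} [MeasurableSpace α] [NormedAddCommGroup E] {μ : Measure α}

lemma sq_integral_le_measureReal_univ_mul_integral_sq [IsFiniteMeasure μ] {f : α → ℝ}
    (hf : MemLp f 2 μ) : (∫ x, f x ∂μ) ^ 2 ≤ μ.real univ * ∫ x, f x ^ 2 ∂μ := by
  have hf_int : Integrable f μ := hf.integrable one_le_two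
  have quadratic_nonneg (c : ℝ) :
      0 ≤ μ.real univ * (c * c) + -2 * (∫ x, f x ∂μ) * c + ∫ x, f x ^ 2 ∂μ := by
    calc
      0 ≤ ∫ x, ((c * c - 2 * c * f x) + f x ^ 2) ∂μ :=
        integral_nonneg fun x ↦ (sq_nonneg (c - f x)).trans_eq (by ring)
      _ = _ := by
        have linear_int : Integrable (fun x ↦ c * c - 2 * c * f x) μ :=
          (integrable_const _).sub (hf_int.const_mul _)
        rw [integral_add linear_int hf.integrable_sq,
          integral_sub (integrable_const _) (hf_int.const_mul _), integral_const,
          integral_const_mul, smul_eq_mul]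
        ring
  have discrim_nonpos := discrim_le_zero quadratic_nonneg
  rw [discrim] at discrim_nonpos
  linarith

lemma memLp_two_norm_of_integrable_sq_norm {f : α → E} (hf : Integrable (fun x ↦ ‖f x‖ ^ 2) μ) :
    MemLp (fun x ↦ ‖f x‖) 2 μ := by
  have norm_meas : AEStronglyMeasurable (fun x ↦ ‖f x‖) μ := by
    simpa only [Function.comp_def, Real.sqrt_sq (norm_nonneg _)] using
      Real.continuous_sqrt.comp_aestronglyMeasurable hf.aestronglyMeasurable
  exact (memLp_two_iff_integrable_sq norm_meas).2 hf

end CauchySchwarz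

lemma integral_left_add_integral_right_le {f : ℝ → ℝ} {a b c d : ℝ} (hac : a ≤ c) (hcd : c ≤ d)
    (hdb : d ≤ b) (hf : IntervalIntegrable f volume a b) (hf_nonneg : ∀ t ∈ Icc c d, 0 ≤ f t) :
    (∫ t in a..c, f t) + ∫ t in d..b, f t ≤ ∫ t in a..b, f t := by
  have hc : c ∈ uIcc a b := mem_uIcc_of_le hac (hcd.trans hdb)
  have hd : d ∈ uIcc a b := mem_uIcc_of_le (hac.trans hcd) hdb
  have hf_ac := hf.mono_set (uIcc_subset_uIcc left_mem_uIcc hc)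
  have hf_cd := hf.mono_set (uIcc_subset_uIcc hc hd)
  have hf_db := hf.mono_set (uIcc_subset_uIcc hd right_mem_uIcc)
  have middle_nonneg : 0 ≤ ∫ t in c..d, f t := intervalIntegral.integral_nonneg hcd hf_nonneg
  rw [← intervalIntegral.integral_add_adjacent_intervals (hf_ac.trans hf_cd) hf_db,
    ← intervalIntegral.integral_add_adjacent_intervals hf_ac hf_cd]
  linarith

section Increments

variable {E : Type*} [NormedAddCommGroup E] {u u' : ℝ → E} {a b : ℝ}

lemma sq_norm_le_two_mul_add (x y : E) : ‖x‖ ^ 2 ≤ 2 * ‖y‖ ^ 2 + 2 * ‖y - x‖ ^ 2 := by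
  calc
    ‖x‖ ^ 2 ≤ (‖y‖ + ‖y - x‖) ^ 2 := by
      gcongr
      simpa only [sub_sub_cancel] using norm_sub_le y (y - x)
    _ ≤ 2 * (‖y‖ ^ 2 + ‖y - x‖ ^ 2) := add_sq_le
    _ = 2 * ‖y‖ ^ 2 + 2 * ‖y - x‖ ^ 2 := mul_add ..

lemma intervalIntegrable_sq_norm_of_continuousOn (hab : a ≤ b) (hu : ContinuousOn u (Icc a b)) :
    IntervalIntegrable (fun t ↦ ‖u t‖ ^ 2) volume a b :=
  (hu.norm.pow 2).intervalIntegrable_of_Icc hab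

variable [NormedSpace ℝ E]

lemma sq_norm_sub_le_mul_integral_sq_norm_deriv (hab : a ≤ b) (hu : ContinuousOn u (Icc a b))
    (hderiv : ∀ t ∈ Ioo a b, HasDerivAt u (u' t) t)
    (energy_int : IntervalIntegrable (fun t ↦ ‖u' t‖ ^ 2) volume a b) :
    ‖u b - u a‖ ^ 2 ≤ (b - a) * ∫ t in a..b, ‖u' t‖ ^ 2 := by
  have norm_memLp : MemLp (fun t ↦ ‖u' t‖) 2 (volume.restrict (Ioc a b)) :=
    memLp_two_norm_of_integrable_sq_norm energy_int.1
  have norm_sub_le_integral : ‖u b - u a‖ ≤ ∫ t in a..b, ‖u' t‖ := by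
    refine norm_sub_le_integral_of_norm_deriv_le_of_le hab hu
      (fun t ht ↦ (hderiv t ht).differentiableAt.differentiableWithinAt)
      (.of_forall fun t ht ↦ (congrArg norm (hderiv t ht).deriv).le) ?_
    exact (intervalIntegrable_iff_integrableOn_Ioc_of_le hab).2 (norm_memLp.integrable one_le_two)
  calc
    ‖u b - u a‖ ^ 2 ≤ (∫ t in a..b, ‖u' t‖) ^ 2 := by gcongr
    _ ≤ (b - a) * ∫ t in a..b, ‖u' t‖ ^ 2 := by
      simpa [intervalIntegral.integral_of_le hab, Measure.real, hab] using
        sq_integral_le_measureReal_univ_mul_integral_sq norm_memLp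

lemma sq_norm_sub_le_abs_mul_integral_sq_norm_deriv (hu : ContinuousOn u (Icc a b))
    (hderiv : ∀ t ∈ Ioo a b, HasDerivAt u (u' t) t)
    (energy_int : IntervalIntegrable (fun t ↦ ‖u' t‖ ^ 2) volume a b) {s t : ℝ}
    (hs : s ∈ Icc a b) (ht : t ∈ Icc a b) :
    ‖u t - u s‖ ^ 2 ≤ |t - s| * ∫ x in a..b, ‖u' x‖ ^ 2 := by
  wlog hst : s ≤ t generalizing s t
  · simpa only [norm_sub_rev, abs_sub_comm] using this ht hs (le_of_not_ge hst)
  have hsub : uIcc s t ⊆ uIcc a b :=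
    uIcc_subset_uIcc (Icc_subset_uIcc hs) (Icc_subset_uIcc ht)
  calc
    ‖u t - u s‖ ^ 2 ≤ (t - s) * ∫ x in s..t, ‖u' x‖ ^ 2 :=
      sq_norm_sub_le_mul_integral_sq_norm_deriv hst (hu.mono (Icc_subset_Icc hs.1 ht.2))
        (fun x hx ↦ hderiv x (Ioo_subset_Ioo hs.1 ht.2 hx)) (energy_int.mono_set hsub)
    _ ≤ |t - s| * ∫ x in a..b, ‖u' x‖ ^ 2 := by
      rw [abs_of_nonneg (sub_nonneg.2 hst)]
      refine mul_le_mul_of_nonneg_left ?_ (sub_nonneg.2 hst)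
      exact intervalIntegral.integral_mono_interval hs.1 hst ht.2
        (.of_forall fun x ↦ sq_nonneg _) energy_int

lemma integral_sq_norm_le_integral_translate (hu : ContinuousOn u (Icc a b))
    (hderiv : ∀ t ∈ Ioo a b, HasDerivAt u (u' t) t)
    (energy_int : IntervalIntegrable (fun t ↦ ‖u' t‖ ^ 2) volume a b) {p q c : ℝ} (hpq : p ≤ q)
    (hsub : Icc p q ⊆ Icc a b) (hsub_translate : Icc (p + c) (q + c) ⊆ Icc a b) :
    ∫ t in p..q, ‖u t‖ ^ 2 ≤
      2 * (∫ t in (p + c)..(q + c), ‖u t‖ ^ 2) +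
        2 * (q - p) * |c| * ∫ t in a..b, ‖u' t‖ ^ 2 := by
  set energy := ∫ t in a..b, ‖u' t‖ ^ 2
  have hmem (t : ℝ) (ht : t ∈ Icc p q) : t + c ∈ Icc a b :=
    hsub_translate ⟨add_le_add_left ht.1 c, add_le_add_left ht.2 c⟩
  have translate_int : IntervalIntegrable (fun t ↦ 2 * ‖u (t + c)‖ ^ 2) volume p q :=
    (intervalIntegrable_sq_norm_of_continuousOn hpq
      (hu.comp (continuous_add_const c).continuousOn hmem)).const_mul 2
  have pointwise_le (t : ℝ) (ht : t ∈ Icc p q) :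
      ‖u t‖ ^ 2 ≤ 2 * ‖u (t + c)‖ ^ 2 + 2 * (|c| * energy) := by
    have increment_le :=
      sq_norm_sub_le_abs_mul_integral_sq_norm_deriv hu hderiv energy_int (hsub ht) (hmem t ht)
    rw [add_sub_cancel_left] at increment_le
    linarith [sq_norm_le_two_mul_add (u t) (u (t + c))]
  calc
    ∫ t in p..q, ‖u t‖ ^ 2 ≤ ∫ t in p..q, (2 * ‖u (t + c)‖ ^ 2 + 2 * (|c| * energy)) :=
      intervalIntegral.integral_mono_on hpq
        (intervalIntegrable_sq_norm_of_continuousOn hpq (hu.mono hsub))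
        (translate_int.add intervalIntegrable_const) pointwise_le
    _ = 2 * (∫ t in (p + c)..(q + c), ‖u t‖ ^ 2) + 2 * (q - p) * |c| * energy := by
      rw [intervalIntegral.integral_add translate_int intervalIntegrable_const,
        intervalIntegral.integral_const_mul, intervalIntegral.integral_const, smul_eq_mul,
        intervalIntegral.integral_comp_add_right fun t ↦ ‖u t‖ ^ 2]
      ring

lemma integral_sq_norm_left_end_le {h : ℝ} (hh : 0 ≤ h) (hhb : a + 2 * h ≤ b)
    (hu : ContinuousOn u (Icc a b)) (hderiv : ∀ t ∈ Ioo a b, HasDerivAt u (u' t) t)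
    (energy_int : IntervalIntegrable (fun t ↦ ‖u' t‖ ^ 2) volume a b) :
    ∫ t in a..(a + h), ‖u t‖ ^ 2 ≤
      2 * (∫ t in (a + h)..(a + 2 * h), ‖u t‖ ^ 2) +
        2 * h ^ 2 * ∫ t in a..(a + 2 * h), ‖u' t‖ ^ 2 := by
  have energy_int_left : IntervalIntegrable (fun t ↦ ‖u' t‖ ^ 2) volume a (a + 2 * h) :=
    energy_int.mono_set (uIcc_subset_uIcc_left (mem_uIcc_of_le (by linarith) hhb))
  have h_translate := integral_sq_norm_le_integral_translate (p := a) (q := a + h) (c := h)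
    (hu.mono (Icc_subset_Icc_right hhb))
    (fun t ht ↦ hderiv t (Ioo_subset_Ioo_right hhb ht)) energy_int_left (by linarith)
    (Icc_subset_Icc_right (by linarith)) (Icc_subset_Icc (by linarith) (by linarith))
  convert h_translate using 3
  · ring_nf
  · rw [abs_of_nonneg hh]
    ring

lemma integral_sq_norm_right_end_le {h : ℝ} (hh : 0 ≤ h) (hah : a ≤ b - 2 * h)
    (hu : ContinuousOn u (Icc a b)) (hderiv : ∀ t ∈ Ioo a b, HasDerivAt u (u' t) t)
    (energy_int : IntervalIntegrable (fun t ↦ ‖u' t‖ ^ 2) volume a b) :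
    ∫ t in (b - h)..b, ‖u t‖ ^ 2 ≤
      2 * (∫ t in (b - 2 * h)..(b - h), ‖u t‖ ^ 2) +
        2 * h ^ 2 * ∫ t in (b - 2 * h)..b, ‖u' t‖ ^ 2 := by
  have energy_int_right : IntervalIntegrable (fun t ↦ ‖u' t‖ ^ 2) volume (b - 2 * h) b :=
    energy_int.mono_set (uIcc_subset_uIcc_right (mem_uIcc_of_le hah (by linarith)))
  have h_translate := integral_sq_norm_le_integral_translate (p := b - h) (q := b) (c := -h)
    (hu.mono (Icc_subset_Icc_left hah))
    (fun t ht ↦ hderiv t (Ioo_subset_Ioo_left hah ht)) energy_int_right (by linarith)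
    (Icc_subset_Icc_left (by linarith)) (Icc_subset_Icc (by linarith) (by linarith))
  convert h_translate using 3
  · ring_nf
  · rw [abs_neg, abs_of_nonneg hh]
    ring

end Increments

theorem sq_integral_le_of_interior_general {E : Type*} [NormedAddCommGroup E] [NormedSpace ℝ E]
    {a b h : ℝ} (hh : 0 ≤ h) (hh4 : h ≤ (b - a) / 4) {u u' : ℝ → E}
    (hu : ContinuousOn u (Icc a b)) (hderiv : ∀ t ∈ Ioo a b, HasDerivAt u (u' t) t)
    (energy_int : IntervalIntegrable (fun t ↦ ‖u' t‖ ^ 2) volume a b) :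
    ∫ t in a..b, ‖u t‖ ^ 2 ≤
      3 * (∫ t in (a + h)..(b - h), ‖u t‖ ^ 2) + 2 * h ^ 2 * ∫ t in a..b, ‖u' t‖ ^ 2 := by
  have hu_int {p q : ℝ} (hap : a ≤ p) (hpq : p ≤ q) (hqb : q ≤ b) :
      IntervalIntegrable (fun t ↦ ‖u t‖ ^ 2) volume p q :=
    intervalIntegrable_sq_norm_of_continuousOn hpq (hu.mono (Icc_subset_Icc hap hqb))
  have left_int := hu_int (p := a) (q := a + h) le_rfl (by linarith) (by linarith)
  have interior_int := hu_int (p := a + h) (q := b - h) (by linarith) (by linarith) (by linarith)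
  have right_int := hu_int (p := b - h) (q := b) (by linarith) (by linarith) le_rfl
  have left_end_le := integral_sq_norm_left_end_le hh (by linarith) hu hderiv energy_int
  have right_end_le := integral_sq_norm_right_end_le hh (by linarith) hu hderiv energy_int
  have translates_le := integral_left_add_integral_right_le (c := a + 2 * h) (d := b - 2 * h)
    (by linarith) (by linarith) (by linarith) interior_int fun t _ ↦ sq_nonneg ‖u t‖
  have energies_le := integral_left_add_integral_right_le (c := a + 2 * h) (d := b - 2 * h)
    (by linarith) (by linarith) (by linarith) energy_int fun t _ ↦ sq_nonneg ‖u' t‖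
  have scaled_energies_le := mul_le_mul_of_nonneg_left energies_le
    (mul_nonneg zero_le_two (sq_nonneg h))
  rw [← intervalIntegral.integral_add_adjacent_intervals (left_int.trans interior_int) right_int,
    ← intervalIntegral.integral_add_adjacent_intervals left_int interior_int]
  linarith

/-- for `a < b`, `0 < h < (b−a)/4` and `u` continuously differentiable
on `[a, b]`, `∫_a^b u² ≤ 3 ∫_{a+h}^{b−h} u² + 4h² ∫_a^b u′²`. -/
theorem sq_integral_le_of_interior
    (a b h : ℝ) (hab : a < b) (hh : 0 < h) (hh4 : h < (b - a) / 4)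
    (u u' : ℝ → ℝ)
    (hderiv : ∀ t ∈ Set.Icc a b, HasDerivAt u (u' t) t)
    (hcont : ContinuousOn u' (Set.Icc a b)) :
    (∫ t in a..b, (u t) ^ 2) ≤
      3 * (∫ t in (a + h)..(b - h), (u t) ^ 2) + 4 * h ^ 2 * ∫ t in a..b, (u' t) ^ 2 := by
  have general := sq_integral_le_of_interior_general hh.le hh4.le
    (HasDerivAt.continuousOn hderiv) (fun t ht ↦ hderiv t (Ioo_subset_Icc_self ht))
    (intervalIntegrable_sq_norm_of_continuousOn hab.le hcont)
  simp only [Real.norm_eq_abs, sq_abs] at general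
  have energy_nonneg : 0 ≤ ∫ t in a..b, u' t ^ 2 :=
    intervalIntegral.integral_nonneg hab.le fun t _ ↦ sq_nonneg _
  nlinarith [mul_nonneg (sq_nonneg h) energy_nonneg]
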